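/- Let p ≥ 7 be prime, a ∈ [3,p-3] fixed. For all sufficiently large k with k ≢ 1 (mod p), there exists t ∈ Z_p such that the a-subsets A of Z_p minimizing s_k(A) are exactly the sets ξ·{t,t+1,...,t+a-1} for nonzero ξ ∈ Z_p. -/

import Mathlib

/-- `skcount k A`: number of `(k+1)`-tuples of elements of `A` with `x 0 = x 1 + ... + x k`. -/
def skcount {p : ℕ} (k : ℕ) (A : Finset (ZMod p)) : ℕ :=
  ((Fintype.piFinset (fun _ : Fin (k + 1) => A)).filter
    (fun x => x 0 = ∑ i : Fin k, x i.succ)).card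

/-- The interval `{t, t+1, ..., t+a-1}` in `ZMod p`. -/
def interval {p : ℕ} (t : ZMod p) (a : ℕ) : Finset (ZMod p) :=
  (Finset.range a).image (fun j : ℕ => t + (j : ZMod p))

open Finset ComplexConjugate

section FourierSums

variable {p : ℕ} [Fact p.Prime]

/-- The exponential sum of `A` at frequency `γ`. -/
noncomputable def expSum (γ : ZMod p) (A : Finset (ZMod p)) : ℂ :=
  ∑ x ∈ A, ZMod.stdAddChar (γ * x)

theorem conj_stdAddChar (x : ZMod p) :
    conj (ZMod.stdAddChar x) = ZMod.stdAddChar (-x) :=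
  (AddChar.map_neg_eq_conj _ _).symm

theorem conj_expSum (γ : ZMod p) (A : Finset (ZMod p)) :
    conj (expSum γ A) = expSum (-γ) A := by
  simp only [expSum, map_sum, conj_stdAddChar, neg_mul]

theorem expSum_zero (A : Finset (ZMod p)) : expSum 0 A = A.card := by
  simp [expSum]

theorem expSum_image_mul {ξ : ZMod p} (hξ : ξ ≠ 0) (γ : ZMod p) (A : Finset (ZMod p)) :
    expSum γ (A.image (fun x => ξ * x)) = expSum (γ * ξ) A := by
  unfold expSum
  rw [sum_image (fun x _ y _ h => mul_left_cancel₀ hξ h)]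
  simp only [mul_assoc]

theorem card_image_mul {ξ : ZMod p} (hξ : ξ ≠ 0) (A : Finset (ZMod p)) :
    (A.image (fun x => ξ * x)).card = A.card :=
  card_image_of_injective _ (mul_right_injective₀ hξ)

theorem image_mul_image_mul (ξ η : ZMod p) (A : Finset (ZMod p)) :
    (A.image (fun x => η * x)).image (fun x => ξ * x) = A.image (fun x => ξ * η * x) := by
  rw [image_image]
  congr 1
  funext x
  simp [mul_assoc]

theorem addChar_map_sum {ι : Type*} (ψ : AddChar (ZMod p) ℂ) (s : Finset ι) (f : ι → ZMod p) :
    ψ (∑ i ∈ s, f i) = ∏ i ∈ s, ψ (f i) := by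
  classical
  induction s using Finset.induction_on with
  | empty => simp
  | insert i s hi ih => rw [sum_insert hi, prod_insert hi, AddChar.map_add_eq_mul, ih]

/-- The Fourier expansion of `skcount`. -/
theorem card_mul_skcount (k : ℕ) (A : Finset (ZMod p)) :
    (p : ℂ) * skcount k A = ∑ γ : ZMod p, expSum γ A ^ k * conj (expSum γ A) := by
  have hprod : ∀ γ : ZMod p, expSum γ A ^ k * conj (expSum γ A) =
      ∑ x ∈ Fintype.piFinset (fun _ : Fin (k + 1) => A),
        (ZMod.stdAddChar (γ * ((∑ i : Fin k, x i.succ) - x 0)) : ℂ) := by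
    intro γ
    have h := prod_univ_sum (fun _ : Fin (k + 1) => A)
      (fun i x => (ZMod.stdAddChar ((if i = 0 then -γ else γ) * x) : ℂ))
    rw [Fin.prod_univ_succ] at h
    simp only [if_true, Fin.succ_ne_zero, if_false, prod_const, card_univ,
      Fintype.card_fin] at h
    rw [conj_expSum, mul_comm]
    unfold expSum
    rw [h]
    refine sum_congr rfl fun x _ => ?_
    rw [Fin.prod_univ_succ]
    simp only [if_true, Fin.succ_ne_zero, if_false]
    rw [mul_sub, sub_eq_neg_add, AddChar.map_add_eq_mul, mul_sum, addChar_map_sum, neg_mul]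
  simp only [hprod]
  rw [sum_comm]
  have horth : ∀ x : Fin (k + 1) → ZMod p,
      ∑ γ : ZMod p, (ZMod.stdAddChar (γ * ((∑ i : Fin k, x i.succ) - x 0)) : ℂ) =
        if x 0 = ∑ i : Fin k, x i.succ then (p : ℂ) else 0 := by
    intro x
    rw [AddChar.sum_mulShift _ (ZMod.isPrimitive_stdAddChar p), ZMod.card]
    by_cases h : x 0 = ∑ i : Fin k, x i.succ
    · simp [h]
    · simp [h, sub_eq_zero, Ne.symm h]
  simp only [horth]
  rw [← sum_filter, sum_const, nsmul_eq_mul, mul_comm]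
  rfl

theorem skcount_image_mul {ξ : ZMod p} (hξ : ξ ≠ 0) (k : ℕ) (A : Finset (ZMod p)) :
    skcount k (A.image (fun x => ξ * x)) = skcount k A := by
  have hp0 : (p : ℂ) ≠ 0 := Nat.cast_ne_zero.mpr (NeZero.ne p)
  have h : (p : ℂ) * skcount k (A.image (fun x => ξ * x)) = p * skcount k A := by
    rw [card_mul_skcount, card_mul_skcount]
    simp only [expSum_image_mul hξ]
    exact Fintype.sum_equiv (Equiv.mulRight₀ ξ hξ) _ _ fun γ => rfl
  exact_mod_cast mul_left_cancel₀ hp0 h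

/-- The contribution of the nonzero frequencies to the Fourier expansion of `skcount`. -/
theorem card_mul_skcount_eq_add (k : ℕ) (A : Finset (ZMod p)) :
    (p : ℝ) * skcount k A = (A.card : ℝ) ^ (k + 1) +
      ∑ γ ∈ univ.erase (0 : ZMod p), (expSum γ A ^ k * conj (expSum γ A)).re := by
  have h := congrArg Complex.re (card_mul_skcount k A)
  rw [← add_sum_erase _ _ (mem_univ (0 : ZMod p)), expSum_zero, Complex.add_re,
    Complex.re_sum] at h
  rw [show ((A.card : ℂ) ^ k * conj (A.card : ℂ)) = (((A.card : ℝ) ^ (k + 1) : ℝ) : ℂ) by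
    push_cast [map_natCast]; ring, Complex.ofReal_re] at h
  rw [← h]
  norm_cast

theorem abs_re_pow_mul_conj_le (z : ℂ) (k : ℕ) : |(z ^ k * conj z).re| ≤ ‖z‖ ^ (k + 1) := by
  refine (Complex.abs_re_le_norm _).trans ?_
  rw [norm_mul, norm_pow, RCLike.norm_conj, pow_succ]

theorem abs_sum_re_le {s : Finset (ZMod p)} {A : Finset (ZMod p)} {r : ℝ} (hr : 0 ≤ r)
    (h : ∀ γ ∈ s, ‖expSum γ A‖ ≤ r) (k : ℕ) :
    |∑ γ ∈ s, (expSum γ A ^ k * conj (expSum γ A)).re| ≤ p * r ^ (k + 1) := by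
  refine (abs_sum_le_sum_abs _ _).trans ?_
  refine (sum_le_card_nsmul _ _ (r ^ (k + 1)) fun γ hγ =>
    (abs_re_pow_mul_conj_le _ k).trans (pow_le_pow_left₀ (norm_nonneg _) (h γ hγ) _)).trans ?_
  rw [nsmul_eq_mul]
  have : (s.card : ℝ) ≤ p := by
    have := card_le_univ s
    rw [ZMod.card] at this
    exact_mod_cast this
  gcongr

/-- `A` maximises the exponential sum at frequency one among the sets of its size. -/
def IsPeak (A : Finset (ZMod p)) : Prop :=
  ∀ B : Finset (ZMod p), B.card = A.card → ‖expSum 1 B‖ ≤ ‖expSum 1 A‖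

theorem IsPeak.re_lt {A : Finset (ZMod p)} (hA : IsPeak A) {x y : ZMod p} (hx : x ∈ A)
    (hy : y ∉ A) :
    (conj (expSum 1 A) * ZMod.stdAddChar y).re < (conj (expSum 1 A) * ZMod.stdAddChar x).re := by
  have hcard : (insert y (A.erase x)).card = A.card := by
    rw [card_insert_of_notMem (by simp [hy]), card_erase_add_one hx]
  have hle := hA _ hcard
  have hsum : expSum 1 (insert y (A.erase x)) =
      expSum 1 A + (ZMod.stdAddChar y - ZMod.stdAddChar x) := by
    unfold expSum
    rw [sum_insert (by simp [hy]), ← add_sum_erase A _ hx]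
    simp only [one_mul]
    ring
  have hne : (ZMod.stdAddChar y : ℂ) - ZMod.stdAddChar x ≠ 0 := by
    rw [sub_ne_zero]
    intro h
    exact hy (ZMod.injective_stdAddChar h ▸ hx)
  rw [hsum] at hle
  generalize expSum 1 A = S at *
  generalize (ZMod.stdAddChar y : ℂ) = u at *
  generalize (ZMod.stdAddChar x : ℂ) = v at *
  have hsq : ‖S + (u - v)‖ ^ 2 ≤ ‖S‖ ^ 2 := pow_le_pow_left₀ (norm_nonneg _) hle 2
  have hpos := Complex.normSq_pos.mpr hne
  rw [← Complex.normSq_eq_norm_sq, ← Complex.normSq_eq_norm_sq] at hsq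
  simp only [Complex.normSq_apply, Complex.add_re, Complex.add_im, Complex.sub_re,
    Complex.sub_im, Complex.mul_re, Complex.conj_re, Complex.conj_im] at *
  nlinarith

theorem card_interval {a : ℕ} (ha : a ≤ p) (t : ZMod p) : (interval t a).card = a := by
  unfold interval
  rw [card_image_of_injOn, card_range]
  intro i hi j hj h
  simp only [coe_range, Set.mem_Iio] at hi hj
  have h' := add_left_cancel h
  rw [ZMod.natCast_eq_natCast_iff', Nat.mod_eq_of_lt (hi.trans_le ha),
    Nat.mod_eq_of_lt (hj.trans_le ha)] at h'
  exact h'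

theorem exists_eq_Icc_of_ordConnected {J : Finset ℤ} (hJ : J.Nonempty)
    (h : ∀ i ∈ J, ∀ j ∈ J, ∀ m, i ≤ m → m ≤ j → m ∈ J) :
    ∃ u : ℤ, J = Icc u (u + J.card - 1) := by
  have hIcc : J = Icc (J.min' hJ) (J.max' hJ) := by
    ext m
    rw [mem_Icc]
    exact ⟨fun hm => ⟨J.min'_le m hm, J.le_max' m hm⟩,
      fun hm => h _ (J.min'_mem hJ) _ (J.max'_mem hJ) m hm.1 hm.2⟩
  have hle := J.min'_le _ (J.max'_mem hJ)
  have hcard := congrArg card hIcc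
  rw [Int.card_Icc] at hcard
  refine ⟨J.min' hJ, ?_⟩
  rw [show J.min' hJ + (J.card : ℤ) - 1 = J.max' hJ by omega]
  exact hIcc

/-- The sets maximising the exponential sum at frequency one are intervals. -/
theorem IsPeak.exists_eq_interval (hp2 : p ≠ 2) {A : Finset (ZMod p)} (hA : IsPeak A) (hne : A.Nonempty) :
    ∃ t, A = interval t A.card := by
  have hpR : (0 : ℝ) < p := Nat.cast_pos.mpr (NeZero.pos p)
  set S := expSum 1 A with hS
  set c : ℝ := S.arg * p / (2 * Real.pi) with hc
  set n : ℤ := round c with hn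
  set f : ZMod p → ℤ := fun x => (x - n).valMinAbs with hf
  have hfx : ∀ x, ((n + f x : ℤ) : ZMod p) = x := by
    intro x
    push_cast [hf, ZMod.coe_valMinAbs]
    ring
  have hodd : p % 2 = 1 := (Nat.Prime.eq_two_or_odd Fact.out).resolve_left hp2
  have hf2 : ∀ x, |f x| ≤ ((p : ℤ) - 1) / 2 := by
    intro x
    have h : (f x).natAbs ≤ p / 2 := ZMod.natAbs_valMinAbs_le (x - (n : ZMod p))
    rw [Int.abs_eq_natAbs]
    omega
  have hfm : ∀ m : ℤ, |m| ≤ ((p : ℤ) - 1) / 2 → f ((n + m : ℤ) : ZMod p) = m := by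
    intro m hm
    rw [abs_le] at hm
    rw [hf, ZMod.valMinAbs_spec]
    refine ⟨by push_cast; ring, ?_, ?_⟩ <;> omega
  have hre : ∀ x, (conj S * ZMod.stdAddChar x).re =
      ‖S‖ * Real.cos |2 * Real.pi / p * (f x - (c - n))| := by
    intro x
    conv_lhs => rw [← hfx x, ZMod.stdAddChar_coe, ← Complex.norm_mul_exp_arg_mul_I S]
    rw [map_mul, Complex.conj_ofReal, mul_assoc, Complex.re_ofReal_mul, ← Complex.exp_conj,
      ← Complex.exp_add]
    congr 1
    rw [Real.cos_abs, ← Complex.exp_ofReal_mul_I_re]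
    congr 2
    rw [map_mul, Complex.conj_ofReal, Complex.conj_I, hc]
    push_cast
    have : (p : ℂ) ≠ 0 := by exact_mod_cast hpR.ne'
    have : (Real.pi : ℂ) ≠ 0 := by exact_mod_cast Real.pi_ne_zero
    field_simp
    ring
  have hround : |c - n| ≤ 1 / 2 := abs_sub_round c
  have hrange : ∀ x, |2 * Real.pi / p * (f x - (c - n))| ∈ Set.Icc 0 Real.pi := by
    intro x
    refine ⟨abs_nonneg _, ?_⟩
    rw [abs_mul, abs_of_pos (by positivity)]
    have h1 : |(f x : ℝ)| ≤ ((p : ℝ) - 1) / 2 := by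
      have h : 2 * |f x| ≤ (p : ℤ) - 1 := by have := hf2 x; omega
      have h' : 2 * |(f x : ℝ)| ≤ (p : ℝ) - 1 := by exact_mod_cast h
      linarith
    have h2 : |(f x : ℝ) - (c - n)| ≤ p / 2 := by
      refine (abs_sub _ _).trans ?_
      linarith
    calc 2 * Real.pi / p * |(f x : ℝ) - (c - n)| ≤ 2 * Real.pi / p * (p / 2) := by gcongr
      _ = Real.pi := by field_simp
  have hlt : ∀ x ∈ A, ∀ y ∉ A, |(f x : ℝ) - (c - n)| < |(f y : ℝ) - (c - n)| := by
    intro x hx y hy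
    have h := hA.re_lt hx hy
    rw [← hS, hre, hre] at h
    have h' := lt_of_mul_lt_mul_left h (norm_nonneg _)
    rw [Real.strictAntiOn_cos.lt_iff_gt (hrange y) (hrange x), abs_mul, abs_mul] at h'
    exact lt_of_mul_lt_mul_left h' (abs_nonneg _)
  have hinj : Function.Injective f := fun x y h => by rw [← hfx x, ← hfx y, h]
  have hcard : (A.image f).card = A.card := card_image_of_injective _ hinj
  obtain ⟨u, hu⟩ := exists_eq_Icc_of_ordConnected (hne.image f) (by
    intro i hi j hj m him hmj
    obtain ⟨x, hx, rfl⟩ := mem_image.mp hi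
    obtain ⟨y, hy, rfl⟩ := mem_image.mp hj
    have hm : |m| ≤ ((p : ℤ) - 1) / 2 :=
      abs_le.mpr ⟨(abs_le.mp (hf2 x)).1.trans him, hmj.trans (abs_le.mp (hf2 y)).2⟩
    rw [← hfm m hm]
    refine mem_image_of_mem f ?_
    by_contra hz
    have hxz := hlt x hx _ hz
    have hyz := hlt y hy _ hz
    rw [hfm m hm] at hxz hyz
    have him' : (f x : ℝ) ≤ m := by exact_mod_cast him
    have hmj' : (m : ℝ) ≤ f y := by exact_mod_cast hmj
    have hmax := abs_le_max_abs_abs (sub_le_sub_right him' (c - n))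
      (sub_le_sub_right hmj' (c - n))
    exact absurd (hmax.trans_lt (max_lt hxz hyz)) (lt_irrefl _))
  rw [hcard] at hu
  refine ⟨((n + u : ℤ) : ZMod p), ?_⟩
  ext x
  rw [← hinj.mem_finset_image, hu, mem_Icc, interval, mem_image]
  constructor
  · rintro ⟨h1, h2⟩
    refine ⟨(f x - u).toNat, mem_range.mpr (by omega), ?_⟩
    rw [← Int.cast_natCast, Int.toNat_of_nonneg (by omega), ← Int.cast_add]
    conv_rhs => rw [← hfx x]
    congr 1
    ring
  · rintro ⟨j, hj, rfl⟩
    have hj' : u + (j : ℤ) ∈ A.image f := by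
      rw [hu, mem_Icc]
      have := mem_range.mp hj
      omega
    obtain ⟨y, -, hy⟩ := mem_image.mp hj'
    have hyeq := hfx y
    rw [hy] at hyeq
    have : ((n + u : ℤ) : ZMod p) + (j : ZMod p) = y := by
      rw [← hyeq]
      push_cast
      ring
    rw [this, hy]
    have := mem_range.mp hj
    omega

theorem exists_forall_pos_imp_le {ι : Type*} [Finite ι] (f : ι → ℝ) :
    ∃ η > 0, ∀ i, 0 < f i → η ≤ f i := by
  have := Fintype.ofFinite ι
  by_cases h : (univ.filter fun i => 0 < f i).Nonempty
  · obtain ⟨i, hi, hmin⟩ := exists_min_image _ f h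
    exact ⟨f i, (mem_filter.mp hi).2, fun j hj => hmin j (by simp [hj])⟩
  · refine ⟨1, one_pos, fun i hi => absurd ⟨i, by simp [hi]⟩ h⟩


/-- The exponential sum at frequency one of the interval of length `a` centred at the origin. -/
noncomputable def centredSum (p : ℕ) [Fact p.Prime] (a : ℕ) : ℂ :=
  ∑ j ∈ range a, ZMod.stdAddChar ((j : ZMod p) - ((a : ZMod p) - 1) / 2)

theorem two_ne_zero_zmod (hp2 : p ≠ 2) : (2 : ZMod p) ≠ 0 := by
  have hp : p.Prime := Fact.out
  intro h
  have h' : ((2 : ℕ) : ZMod p) = 0 := by exact_mod_cast h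
  rw [ZMod.natCast_eq_zero_iff] at h'
  exact hp2 ((Nat.prime_dvd_prime_iff_eq hp Nat.prime_two).mp h')

theorem conj_centredSum (hp2 : p ≠ 2) (a : ℕ) : conj (centredSum p a) = centredSum p a := by
  have h2 := two_ne_zero_zmod hp2
  unfold centredSum
  rw [map_sum, ← sum_range_reflect]
  refine sum_congr rfl fun j hj => ?_
  rw [conj_stdAddChar]
  congr 1
  have hj' := mem_range.mp hj
  have : ((a - 1 - j : ℕ) : ZMod p) = (a : ZMod p) - 1 - j := by
    rw [Nat.sub_sub, Nat.cast_sub (by omega)]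
    push_cast
    ring
  rw [this]
  field_simp
  ring

theorem expSum_one_interval {a : ℕ} (ha : a ≤ p) (t : ZMod p) :
    expSum 1 (interval t a) =
      ZMod.stdAddChar (t + ((a : ZMod p) - 1) / 2) * centredSum p a := by
  have hinj : Set.InjOn (fun j : ℕ => t + (j : ZMod p)) (range a) := by
    rw [← card_image_iff]
    exact (card_interval ha t).trans (card_range a).symm
  unfold expSum interval centredSum
  rw [sum_image hinj, mul_sum]
  refine sum_congr rfl fun j _ => ?_
  rw [← AddChar.map_add_eq_mul]
  congr 1
  ring

theorem norm_expSum_one_interval {a : ℕ} (ha : a ≤ p) (t : ZMod p) :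
    ‖expSum 1 (interval t a)‖ = ‖centredSum p a‖ := by
  rw [expSum_one_interval ha, norm_mul, AddChar.norm_apply, one_mul]

/-- The norm of the exponential sum of any set at any nonzero frequency is bounded by that of
an interval at frequency one. -/
theorem norm_expSum_le (hp2 : p ≠ 2) {a : ℕ} (ha0 : 0 < a) (ha : a ≤ p) {γ : ZMod p} (hγ : γ ≠ 0)
    {A : Finset (ZMod p)} (hA : A.card = a) : ‖expSum γ A‖ ≤ ‖centredSum p a‖ := by
  obtain ⟨P, hP, hmax⟩ := exists_max_image (powersetCard a (univ : Finset (ZMod p)))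
    (fun B => ‖expSum 1 B‖) ⟨A, by simp [mem_powersetCard, hA]⟩
  have hPa : P.card = a := (mem_powersetCard.mp hP).2
  have hpeak : IsPeak P := fun B hB =>
    hmax B (mem_powersetCard.mpr ⟨subset_univ _, hB.trans hPa⟩)
  obtain ⟨t, ht⟩ := hpeak.exists_eq_interval hp2 (card_pos.mp (hPa ▸ ha0))
  have h := hpeak (A.image (fun x => γ * x)) (by rw [card_image_mul hγ, hA, hPa])
  rwa [expSum_image_mul hγ, one_mul, ht, hPa, norm_expSum_one_interval ha] at h

theorem isPeak_image_mul (hp2 : p ≠ 2) {a : ℕ} (ha0 : 0 < a) (ha : a ≤ p) {γ : ZMod p}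
    (hγ : γ ≠ 0) {A : Finset (ZMod p)} (hA : A.card = a)
    (h : ‖expSum γ A‖ = ‖centredSum p a‖) : IsPeak (A.image (fun x => γ * x)) := by
  intro B hB
  rw [expSum_image_mul hγ, one_mul, h]
  rw [card_image_mul hγ, hA] at hB
  exact norm_expSum_le hp2 ha0 ha one_ne_zero hB

theorem exists_image_mul_eq_interval (hp2 : p ≠ 2) {a : ℕ} (ha0 : 0 < a) (ha : a ≤ p) {γ : ZMod p}
    (hγ : γ ≠ 0) {A : Finset (ZMod p)} (hA : A.card = a)
    (h : ‖expSum γ A‖ = ‖centredSum p a‖) : ∃ t, A.image (fun x => γ * x) = interval t a := by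
  obtain ⟨t, ht⟩ := (isPeak_image_mul hp2 ha0 ha hγ hA h).exists_eq_interval hp2
    ((card_pos.mp (hA ▸ ha0)).image _)
  rw [card_image_mul hγ, hA] at ht
  exact ⟨t, ht⟩

theorem mem_interval_iff {a : ℕ} (t x : ZMod p) (ha : a ≤ p) :
    x ∈ interval t a ↔ (x - t).val < a := by
  unfold interval
  rw [mem_image]
  constructor
  · rintro ⟨j, hj, rfl⟩
    have hj := mem_range.mp hj
    rwa [add_sub_cancel_left, ZMod.val_natCast_of_lt (hj.trans_le ha)]
  · intro h
    exact ⟨_, mem_range.mpr h, by rw [ZMod.natCast_zmod_val]; ring⟩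

theorem centredSum_ne_zero (hp2 : p ≠ 2) {a : ℕ} (ha0 : 0 < a) (ha : a < p) :
    centredSum p a ≠ 0 := by
  intro h
  have hS : expSum 1 (interval (0 : ZMod p) a) = 0 := by
    rw [expSum_one_interval ha.le, h, mul_zero]
  have hpeak : IsPeak (interval (0 : ZMod p) a) := by
    intro B hB
    rw [card_interval ha.le] at hB
    rw [norm_expSum_one_interval ha.le]
    exact norm_expSum_le hp2 ha0 ha.le one_ne_zero hB
  have hx : (0 : ZMod p) ∈ interval 0 a := by
    rw [mem_interval_iff _ _ ha.le]
    simpa using ha0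
  have hy : (a : ZMod p) ∉ interval 0 a := by
    rw [mem_interval_iff _ _ ha.le, sub_zero, ZMod.val_natCast_of_lt ha]
    exact lt_irrefl a
  have := hpeak.re_lt hx hy
  simp [hS] at this

/-- The only point of an interval whose successor leaves the interval is its last point. -/
theorem eq_of_mem_interval_of_add_one_notMem {a : ℕ} {t x : ZMod p}
    (hx : x ∈ interval t a) (hx' : x + 1 ∉ interval t a) : x = t + ((a : ZMod p) - 1) := by
  unfold interval at hx hx'
  obtain ⟨j, hj, rfl⟩ := mem_image.mp hx
  have hja := mem_range.mp hj
  have : ¬ j + 1 < a := fun h => hx' (mem_image.mpr ⟨j + 1, mem_range.mpr h, by push_cast; ring⟩)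
  have : a = j + 1 := by omega
  rw [this]
  push_cast
  ring

/-- A dilate of an interval is an interval only for the trivial dilations. -/
theorem eq_one_or_neg_one_of_image_mul_interval {a : ℕ} (ha : 2 ≤ a) (ha' : a + 2 ≤ p)
    {γ t u : ZMod p} (hγ : γ ≠ 0)
    (h : (interval t a).image (fun x => γ * x) = interval u a) : γ = 1 ∨ γ = -1 := by
  by_contra! hne
  set d : ℕ := (γ⁻¹).val with hd
  have hdγ : (d : ZMod p) = γ⁻¹ := ZMod.natCast_zmod_val _
  have hdp : d < p := ZMod.val_lt _
  have hd0 : d ≠ 0 := fun h0 => inv_ne_zero hγ (by rw [← hdγ, h0, Nat.cast_zero])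
  have hd1 : d ≠ 1 := fun h1 => hne.1 (by rw [← inv_inv γ, ← hdγ, h1, Nat.cast_one, inv_one])
  have hdm : d + 1 ≠ p := by
    intro h1
    have h2 : (d : ZMod p) + 1 = 0 := by
      rw [← Nat.cast_add_one, h1, ZMod.natCast_self]
    refine hne.2 ?_
    rw [← inv_inv γ, ← hdγ, eq_neg_of_add_eq_zero_left h2, inv_neg, inv_one]
  have hexit : ∀ j : ℕ, j < a → a ≤ j + d → j + d < p →
      γ * (t + j) = u + ((a : ZMod p) - 1) := by
    intro j hj h1 h2
    refine eq_of_mem_interval_of_add_one_notMem ?_ ?_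
    · rw [← h]
      exact mem_image_of_mem _ (mem_image_of_mem _ (mem_range.mpr hj))
    · rw [← h]
      intro hmem
      have heq : γ * (t + j) + 1 = γ * (t + (j + d : ℕ)) := by
        push_cast
        rw [hdγ]
        field_simp
        ring
      obtain ⟨z, hz, hz'⟩ := mem_image.mp hmem
      rw [heq] at hz'
      rw [mul_left_cancel₀ hγ hz', mem_interval_iff _ _ (by omega), add_sub_cancel_left,
        ZMod.val_natCast_of_lt h2] at hz
      omega
  have htwo : ∀ j : ℕ, j + 1 < a → a ≤ j + d → j + 1 + d < p → False := by
    intro j hj h1 h2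
    have e1 := hexit j (by omega) h1 (by omega)
    have e2 := hexit (j + 1) hj (by omega) h2
    have e3 := mul_left_cancel₀ hγ (e2.trans e1.symm)
    push_cast at e3
    have : (1 : ZMod p) = 0 := by linear_combination e3
    exact one_ne_zero this
  by_cases hda : a ≤ d
  · exact htwo 0 (by omega) (by omega) (by omega)
  · exact htwo (a - d) (by omega) (by omega) (by omega)

theorem norm_expSum_interval_lt (hp2 : p ≠ 2) {a : ℕ} (ha : 2 ≤ a) (ha' : a + 2 ≤ p)
    {γ t : ZMod p} (hγ : γ ≠ 0) (h1 : γ ≠ 1) (h2 : γ ≠ -1) :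
    ‖expSum γ (interval t a)‖ < ‖centredSum p a‖ := by
  have hc := card_interval (show a ≤ p by omega) t
  refine lt_of_le_of_ne (norm_expSum_le hp2 (by omega) (by omega) hγ hc) fun h => ?_
  obtain ⟨u, hu⟩ := exists_image_mul_eq_interval hp2 (by omega) (by omega) hγ hc h
  exact (eq_one_or_neg_one_of_image_mul_interval ha ha' hγ hu).elim h1 h2

/-- The main term of `p * skcount k (interval t a)`. -/
theorem re_expSum_interval (hp2 : p ≠ 2) {a : ℕ} (ha : a ≤ p) (k : ℕ) (t : ZMod p) :
    (expSum 1 (interval t a) ^ k * conj (expSum 1 (interval t a))).re =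
      (centredSum p a).re ^ (k + 1) *
        (ZMod.stdAddChar (((k : ZMod p) - 1) * (t + ((a : ZMod p) - 1) / 2))).re := by
  obtain ⟨T, hT⟩ := Complex.conj_eq_iff_real.mp (conj_centredSum (p := p) hp2 a)
  rw [expSum_one_interval ha, hT, map_mul, Complex.conj_ofReal, conj_stdAddChar, mul_pow,
    Complex.ofReal_re, ← Complex.re_ofReal_mul]
  congr 1
  generalize t + ((a : ZMod p) - 1) / 2 = c
  rw [sub_one_mul, sub_eq_add_neg, AddChar.map_add_eq_mul, ← nsmul_eq_mul,
    AddChar.map_nsmul_eq_pow]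
  push_cast
  ring

theorem sum_re_interval (hp2 : p ≠ 2) {a : ℕ} (ha : a ≤ p) (k : ℕ) (t : ZMod p) :
    ∑ γ ∈ univ.erase (0 : ZMod p),
        (expSum γ (interval t a) ^ k * conj (expSum γ (interval t a))).re =
      2 * ((centredSum p a).re ^ (k + 1) *
        (ZMod.stdAddChar (((k : ZMod p) - 1) * (t + ((a : ZMod p) - 1) / 2))).re) +
      ∑ γ ∈ ((univ.erase (0 : ZMod p)).erase 1).erase (-1),
        (expSum γ (interval t a) ^ k * conj (expSum γ (interval t a))).re := by
  have h2 := two_ne_zero_zmod hp2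
  have hne : (-1 : ZMod p) ≠ 1 := fun h => h2 (by linear_combination -h)
  rw [← add_sum_erase _ _ (show (1 : ZMod p) ∈ univ.erase (0 : ZMod p) by simp),
    ← add_sum_erase _ _ (show (-1 : ZMod p) ∈ (univ.erase (0 : ZMod p)).erase 1 by simp [hne]),
    ← re_expSum_interval hp2 ha, ← conj_expSum]
  have : (conj (expSum 1 (interval t a)) ^ k * conj (conj (expSum 1 (interval t a)))).re =
      (expSum 1 (interval t a) ^ k * conj (expSum 1 (interval t a))).re := by
    rw [← map_pow, ← map_mul, Complex.conj_re]
  rw [this]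
  ring

theorem image_neg_one_mul_interval {a : ℕ} (ha : a ≤ p) (t : ZMod p) :
    (interval t a).image (fun x => -1 * x) = interval (1 - (a : ZMod p) - t) a := by
  refine eq_of_subset_of_card_le ?_ ?_
  · intro x hx
    unfold interval at hx ⊢
    obtain ⟨y, hy, rfl⟩ := mem_image.mp hx
    obtain ⟨j, hj, rfl⟩ := mem_image.mp hy
    have hj := mem_range.mp hj
    refine mem_image.mpr ⟨a - 1 - j, mem_range.mpr (by omega), ?_⟩
    rw [Nat.sub_sub, Nat.cast_sub (by omega)]
    push_cast
    ring
  · rw [card_image_mul (neg_ne_zero.mpr one_ne_zero), card_interval ha, card_interval ha]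

theorem eq_or_eq_neg_of_re_stdAddChar_eq {z w : ZMod p}
    (h : (ZMod.stdAddChar z : ℂ).re = (ZMod.stdAddChar w : ℂ).re) : z = w ∨ z = -w := by
  have hz := congrArg (· ^ 2) (AddChar.norm_apply (ZMod.stdAddChar (N := p)) z)
  have hw := congrArg (· ^ 2) (AddChar.norm_apply (ZMod.stdAddChar (N := p)) w)
  simp only [← Complex.normSq_eq_norm_sq, Complex.normSq_apply] at hz hw
  have him : (ZMod.stdAddChar z : ℂ).im ^ 2 = (ZMod.stdAddChar w : ℂ).im ^ 2 := by
    rw [h] at hz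
    linarith
  rcases sq_eq_sq_iff_eq_or_eq_neg.mp him with him | him
  · exact Or.inl (ZMod.injective_stdAddChar (Complex.ext h him))
  · refine Or.inr (ZMod.injective_stdAddChar (Complex.ext ?_ ?_)) <;>
      rw [← conj_stdAddChar] <;> simpa using by assumption

theorem exists_re_stdAddChar_neg : ∃ z : ZMod p, (ZMod.stdAddChar z : ℂ).re < 0 := by
  by_contra! h
  have hsum : ∑ z : ZMod p, (ZMod.stdAddChar z : ℂ) = 0 := by
    have := AddChar.sum_mulShift (1 : ZMod p) (ZMod.isPrimitive_stdAddChar p)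
    simpa using this
  have hre := congrArg Complex.re hsum
  rw [Complex.re_sum, Complex.zero_re] at hre
  have := (sum_eq_zero_iff_of_nonneg fun z _ => h z).mp hre 0 (mem_univ _)
  simp at this

theorem exists_gap (p : ℕ) [Fact p.Prime] : ∃ η > 0, ∀ ε : ℝ, ε = 1 ∨ ε = -1 →
    (∀ z w : ZMod p, ε * (ZMod.stdAddChar z : ℂ).re < ε * (ZMod.stdAddChar w : ℂ).re →
      ε * (ZMod.stdAddChar z : ℂ).re + η ≤ ε * (ZMod.stdAddChar w : ℂ).re) ∧
    ∃ z : ZMod p, ε * (ZMod.stdAddChar z : ℂ).re ≤ -η := by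
  obtain ⟨η₁, hη₁, h₁⟩ := exists_forall_pos_imp_le fun q : ZMod p × ZMod p =>
    (ZMod.stdAddChar q.1 : ℂ).re - (ZMod.stdAddChar q.2 : ℂ).re
  obtain ⟨z, hz⟩ := exists_re_stdAddChar_neg (p := p)
  refine ⟨min η₁ (min 1 (-(ZMod.stdAddChar z : ℂ).re)),
    lt_min hη₁ (lt_min one_pos (neg_pos.mpr hz)), ?_⟩
  have hm₁ := min_le_left η₁ (min 1 (-(ZMod.stdAddChar z : ℂ).re))
  have hm₂ := min_le_right η₁ (min 1 (-(ZMod.stdAddChar z : ℂ).re))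
  have hm₃ := hm₂.trans (min_le_left _ _)
  have hm₄ := hm₂.trans (min_le_right _ _)
  rintro ε (rfl | rfl)
  · refine ⟨fun x y hxy => ?_, z, by linarith⟩
    have := h₁ (y, x) (by simp only; linarith)
    simp only at this
    linarith
  · refine ⟨fun x y hxy => ?_, 0, ?_⟩
    · have := h₁ (x, y) (by simp only; linarith)
      simp only at this
      linarith
    · rw [AddChar.map_zero_eq_one, Complex.one_re]
      linarith

/-- A uniform bound for the exponential sums that do not attain the maximal norm. -/
theorem exists_second_bound {a : ℕ} (h : centredSum p a ≠ 0) :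
    ∃ r, 0 ≤ r ∧ r < ‖centredSum p a‖ ∧ ∀ (γ : ZMod p) (A : Finset (ZMod p)),
      ‖expSum γ A‖ < ‖centredSum p a‖ → ‖expSum γ A‖ ≤ r := by
  obtain ⟨η, hη, hle⟩ := exists_forall_pos_imp_le fun q : ZMod p × Finset (ZMod p) =>
    ‖centredSum p a‖ - ‖expSum q.1 q.2‖
  refine ⟨max 0 (‖centredSum p a‖ - η), le_max_left _ _,
    max_lt (norm_pos_iff.mpr h) (by linarith), fun γ A hlt => ?_⟩
  have := hle (γ, A) (sub_pos.mpr hlt)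
  simp only at this
  exact le_max_of_le_right (by linarith)

/-- The optimal interval has strictly fewer solutions than any set that is not its dilate. -/
theorem exists_interval_skcount_lt (hp2 : p ≠ 2) {a k : ℕ} (ha : 2 ≤ a) (ha' : a + 2 ≤ p)
    (hk : (k : ZMod p) ≠ 1) {η r : ℝ} (hr0 : 0 ≤ r)
    (hr : ∀ (γ : ZMod p) (A : Finset (ZMod p)),
      ‖expSum γ A‖ < ‖centredSum p a‖ → ‖expSum γ A‖ ≤ r)
    (hη : ∀ ε : ℝ, ε = 1 ∨ ε = -1 →
      (∀ z w : ZMod p, ε * (ZMod.stdAddChar z : ℂ).re < ε * (ZMod.stdAddChar w : ℂ).re →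
        ε * (ZMod.stdAddChar z : ℂ).re + η ≤ ε * (ZMod.stdAddChar w : ℂ).re) ∧
      ∃ z : ZMod p, ε * (ZMod.stdAddChar z : ℂ).re ≤ -η)
    (hlarge : p * r ^ (k + 1) < η * ‖centredSum p a‖ ^ (k + 1)) :
    ∃ t : ZMod p, ∀ B : Finset (ZMod p), B.card = a →
      (∃ ξ : ZMod p, ξ ≠ 0 ∧ B = (interval t a).image (fun x => ξ * x)) ∨
        skcount k (interval t a) < skcount k B := by
  have hap : a ≤ p := by omega
  have hpR : (0 : ℝ) < p := Nat.cast_pos.mpr (NeZero.pos p)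
  have hk' : (k : ZMod p) - 1 ≠ 0 := sub_ne_zero.mpr hk
  set M := ‖centredSum p a‖ with hM
  obtain ⟨ε, hε, hT⟩ : ∃ ε : ℝ, (ε = 1 ∨ ε = -1) ∧
      (centredSum p a).re ^ (k + 1) = ε * M ^ (k + 1) := by
    obtain ⟨T, hT⟩ := Complex.conj_eq_iff_real.mp (conj_centredSum (p := p) hp2 a)
    rw [hM, hT, Complex.ofReal_re, Complex.norm_real, Real.norm_eq_abs]
    rcases abs_choice T with h | h
    · exact ⟨1, Or.inl rfl, by rw [h, one_mul]⟩
    · refine ⟨(-1) ^ (k + 1), neg_one_pow_eq_or ℝ _, ?_⟩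
      rw [h, ← mul_pow]
      ring
  obtain ⟨hgap, z₁, hz₁⟩ := hη ε hε
  obtain ⟨z, -, hz⟩ := exists_min_image (univ : Finset (ZMod p))
    (fun z => ε * (ZMod.stdAddChar z : ℂ).re) univ_nonempty
  set h2 : ZMod p := ((a : ZMod p) - 1) / 2 with hh2
  set t : ZMod p := ((k : ZMod p) - 1)⁻¹ * z - h2 with ht
  have htz : ((k : ZMod p) - 1) * (t + h2) = z := by
    rw [ht]
    field_simp
    ring
  have hrest : ∀ u : ZMod p,
      |∑ γ ∈ ((univ.erase (0 : ZMod p)).erase 1).erase (-1),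
        (expSum γ (interval u a) ^ k * conj (expSum γ (interval u a))).re| ≤ p * r ^ (k + 1) := by
    intro u
    refine abs_sum_re_le hr0 (fun γ hγ => hr _ _ ?_) k
    simp only [mem_erase, mem_univ, and_true] at hγ
    exact norm_expSum_interval_lt hp2 ha ha' hγ.2.2 hγ.2.1 hγ.1
  have hmain : ∀ u : ZMod p, (p : ℝ) * skcount k (interval u a) = (a : ℝ) ^ (k + 1) +
      (2 * M ^ (k + 1) * (ε * (ZMod.stdAddChar (((k : ZMod p) - 1) * (u + h2)) : ℂ).re) +
        ∑ γ ∈ ((univ.erase (0 : ZMod p)).erase 1).erase (-1),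
          (expSum γ (interval u a) ^ k * conj (expSum γ (interval u a))).re) := by
    intro u
    rw [card_mul_skcount_eq_add, sum_re_interval hp2 hap, card_interval hap, hT]
    ring
  have hMpow : 0 ≤ M ^ (k + 1) := pow_nonneg (norm_nonneg _) _
  have ht_main := hmain t
  have ht_rest := (abs_le.mp (hrest t)).2
  rw [htz] at ht_main
  have hzη := (hz z₁ (mem_univ _)).trans hz₁
  refine ⟨t, fun B hB => ?_⟩
  by_cases hAP : ∃ γ : ZMod p, γ ≠ 0 ∧ ‖expSum γ B‖ = M
  · obtain ⟨γ, hγ, hγB⟩ := hAP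
    obtain ⟨u, hu⟩ := exists_image_mul_eq_interval hp2 (by omega) hap hγ hB hγB
    have hBu : B = (interval u a).image (fun x => γ⁻¹ * x) := by
      rw [← hu, image_mul_image_mul, inv_mul_cancel₀ hγ]
      simp
    rcases (hz (((k : ZMod p) - 1) * (u + h2)) (mem_univ _)).eq_or_lt with heq | hlt
    · left
      have hε0 : ε ≠ 0 := by rcases hε with rfl | rfl <;> norm_num
      rcases eq_or_eq_neg_of_re_stdAddChar_eq (mul_left_cancel₀ hε0 heq) with h | h
      · rw [← htz] at h
        have hut : t = u := add_right_cancel (mul_left_cancel₀ hk' h)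
        exact ⟨γ⁻¹, inv_ne_zero hγ, by rw [hut, hBu]⟩
      · rw [← htz, ← mul_neg] at h
        have hut := mul_left_cancel₀ hk' h
        have h2' := two_ne_zero_zmod hp2
        have hua : u = 1 - a - t := by
          have : h2 * 2 = (a : ZMod p) - 1 := div_mul_cancel₀ _ h2'
          linear_combination hut - this
        refine ⟨γ⁻¹ * -1, mul_ne_zero (inv_ne_zero hγ) (neg_ne_zero.mpr one_ne_zero), ?_⟩
        rw [← image_mul_image_mul, image_neg_one_mul_interval hap, ← hua, hBu]
    · right
      have hgap' := hgap _ _ hlt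
      have hu_main := hmain u
      have hu_rest := (abs_le.mp (hrest u)).1
      rw [hBu, skcount_image_mul (inv_ne_zero hγ)]
      have := mul_le_mul_of_nonneg_left hgap' hMpow
      have hfin : (p : ℝ) * skcount k (interval t a) < p * skcount k (interval u a) := by
        rw [ht_main, hu_main]
        linarith
      exact_mod_cast lt_of_mul_lt_mul_left hfin hpR.le
  · right
    push Not at hAP
    have hB_rest := (abs_le.mp (abs_sum_re_le (s := univ.erase (0 : ZMod p)) (A := B) hr0
      (fun γ hγ => hr _ _ (lt_of_le_of_ne
        (norm_expSum_le hp2 (by omega) hap (ne_of_mem_erase hγ) hB)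
        (hAP γ (ne_of_mem_erase hγ)))) k)).1
    have := mul_le_mul_of_nonneg_left hzη hMpow
    have hfin : (p : ℝ) * skcount k (interval t a) < p * skcount k B := by
      rw [ht_main, card_mul_skcount_eq_add k B, hB]
      linarith
    exact_mod_cast lt_of_mul_lt_mul_left hfin hpR.le

theorem eventually_mul_pow_lt {C η r M : ℝ} (hη : 0 < η) (hr : 0 ≤ r) (hrM : r < M) :
    ∀ᶠ k : ℕ in Filter.atTop, C * r ^ (k + 1) < η * M ^ (k + 1) := by
  have hM : 0 < M := hr.trans_lt hrM
  have hlim := ((tendsto_pow_atTop_nhds_zero_of_lt_one (div_nonneg hr hM.le)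
    ((div_lt_one hM).mpr hrM)).comp (Filter.tendsto_add_atTop_nat 1)).const_mul C
  rw [mul_zero] at hlim
  filter_upwards [hlim.eventually (gt_mem_nhds hη)] with k hk
  simp only [Function.comp_apply, div_pow] at hk
  rwa [← mul_div_assoc, div_lt_iff₀ (pow_pos hM _)] at hk

end FourierSums

theorem stmt_14 (p : ℕ) (hp : p.Prime) (hp7 : 7 ≤ p)
    (a : ℕ) (ha : 3 ≤ a) (ha' : a ≤ p - 3) :
    ∃ k0 : ℕ, ∀ k : ℕ, k0 ≤ k → ¬ k ≡ 1 [MOD p] →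
      ∃ t : ZMod p, ∀ A : Finset (ZMod p), A.card = a →
        ((∀ B : Finset (ZMod p), B.card = a → skcount k A ≤ skcount k B) ↔
          ∃ ξ : ZMod p, ξ ≠ 0 ∧ A = (interval t a).image (fun x => ξ * x)) := by
  have : Fact p.Prime := ⟨hp⟩
  have hp2 : p ≠ 2 := by omega
  obtain ⟨η, hη0, hη⟩ := exists_gap p
  obtain ⟨r, hr0, hrM, hr⟩ := exists_second_bound
    (centredSum_ne_zero (p := p) (a := a) hp2 (by omega) (by omega))
  obtain ⟨k0, hk0⟩ := Filter.eventually_atTop.mp (eventually_mul_pow_lt (C := p) hη0 hr0 hrM)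
  refine ⟨k0, fun k hk hk1 => ?_⟩
  have hk1' : (k : ZMod p) ≠ 1 := fun h => hk1 ((ZMod.natCast_eq_natCast_iff k 1 p).mp (by simpa))
  obtain ⟨t, ht⟩ := exists_interval_skcount_lt hp2 (a := a) (by omega) (by omega) hk1' hr0 hr hη
    (hk0 k hk)
  refine ⟨t, fun A hA => ⟨fun hmin => ?_, ?_⟩⟩
  · exact (ht A hA).resolve_right
      (not_lt.mpr (hmin _ (card_interval (by omega) t)))
  · rintro ⟨ξ, hξ, rfl⟩ B hB
    rw [skcount_image_mul hξ]
    rcases ht B hB with ⟨ζ, hζ, rfl⟩ | hlt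
    · rw [skcount_image_mul hζ]
    · exact hlt.le
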